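/- Suppose r ≥ 2, the least common multiple b = lcm(f_1, f_2) has degree d+1, and b is the only square-free monomial of degree d+1 that lies in (f_1, f_2) \ J. Then depth_S (I/J) = d. -/

import Mathlib

open MvPolynomial

/-- The square-free monomial `∏ i ∈ T, X i` associated to a set `T` of variables. -/
noncomputable def sqMon (K : Type) [Field K] {n : ℕ} (T : Finset (Fin n)) :
    MvPolynomial (Fin n) K :=
  ∏ i ∈ T, X i

/-- `GenBySqMonOfDeg K P I` means: `I` is generated by square-free monomials whose
degrees satisfy the predicate `P`. -/
def GenBySqMonOfDeg (K : Type) [Field K] {n : ℕ} (P : ℕ → Prop)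
    (I : Ideal (MvPolynomial (Fin n) K)) : Prop :=
  ∃ G : Set (Finset (Fin n)), (∀ T ∈ G, P T.card) ∧ I = Ideal.span (sqMon K '' G)

/-- `rho K d I` : the number of square-free monomials of degree `d` belonging to `I`. -/
noncomputable def rho (K : Type) [Field K] {n : ℕ} (d : ℕ)
    (I : Ideal (MvPolynomial (Fin n) K)) : ℕ :=
  Set.ncard {T : Finset (Fin n) | T.card = d ∧ sqMon K T ∈ I}

/-- The maximal graded ideal `(x_1, …, x_n)` of `K[x_1, …, x_n]`. -/
noncomputable def maxGraded (K : Type) [Field K] (n : ℕ) :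
    Ideal (MvPolynomial (Fin n) K) :=
  Ideal.span (Set.range (X : Fin n → MvPolynomial (Fin n) K))

/-- The depth of the module `M` with respect to the ideal `I` : the supremum of the
lengths of `M`-regular sequences consisting of elements of `I`. -/
noncomputable def moduleDepth {R : Type} [CommRing R] (I : Ideal R)
    (M : Type) [AddCommGroup M] [Module R M] : ℕ∞ :=
  sSup {k : ℕ∞ | ∃ rs : List R, k = (rs.length : ℕ∞) ∧ (∀ r ∈ rs, r ∈ I) ∧
    RingTheory.Sequence.IsRegular M rs}

/-- The `R`-module `I/J` (more precisely `I/(I ∩ J)`, which is `I/J` when `J ≤ I`). -/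
noncomputable abbrev idealQuot {R : Type} [CommRing R] (I J : Ideal R) : Type :=
  ↥I ⧸ (Submodule.comap I.subtype (J : Submodule R R))


section Aux
open CategoryTheory CategoryTheory.Abelian

/-- Vanishing of `Ext^i(R/m, M)`. -/
def EV {R : Type} [CommRing R] (m : Ideal R) (M : Type) [AddCommGroup M] [Module R M] (i : ℕ) :
    Prop :=
  Subsingleton (Ext (ModuleCat.of R (R ⧸ m)) (ModuleCat.of R M) i)

section ses
variable {R : Type} [CommRing R] (m : Ideal R) {A B C : Type} [AddCommGroup A] [Module R A]
  [AddCommGroup B] [Module R B] [AddCommGroup C] [Module R C]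
  (f : A →ₗ[R] B) (g : B →ₗ[R] C)

lemma EV.congr {m : Ideal R} (e : A ≃ₗ[R] B) {i : ℕ} (h : EV m A i) : EV m B i := by
  unfold EV at *
  refine ⟨fun x y => ?_⟩
  have key : ∀ z : Ext (ModuleCat.of R (R ⧸ m)) (ModuleCat.of R B) i, z = 0 := by
    intro z
    have h1 : (z.comp (Ext.mk₀ (ModuleCat.ofHom e.symm.toLinearMap)) (add_zero i)).comp
        (Ext.mk₀ (ModuleCat.ofHom e.toLinearMap)) (add_zero i) = z := by
      rw [Ext.comp_assoc_of_third_deg_zero, Ext.mk₀_comp_mk₀, ← ModuleCat.ofHom_comp]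
      simp
    rw [← h1, Subsingleton.elim (z.comp (Ext.mk₀ (ModuleCat.ofHom e.symm.toLinearMap))
      (add_zero i)) 0, Ext.zero_comp]
  rw [key x, key y]

lemma EV.congr_iff {m : Ideal R} (e : A ≃ₗ[R] B) {i : ℕ} : EV m A i ↔ EV m B i :=
  ⟨fun h => h.congr e, fun h => h.congr e.symm⟩

lemma EV_iff_forall (m : Ideal R) (i : ℕ) : EV m A i ↔
    ∀ z : Ext (ModuleCat.of R (R ⧸ m)) (ModuleCat.of R A) i, z = 0 :=
  ⟨fun h z => by unfold EV at h; exact Subsingleton.elim _ _,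
    fun h => ⟨fun x y => by rw [h x, h y]⟩⟩

lemma EV_of_subsingleton (m : Ideal R) (i : ℕ) [Subsingleton A] : EV m A i := by
  rw [EV_iff_forall]
  intro z
  rw [← Ext.comp_mk₀_id z]
  have : 𝟙 (ModuleCat.of R A) = 0 := by
    ext x
    exact Subsingleton.elim (α := A) _ _
  rw [this, Ext.mk₀_zero, Ext.comp_zero]

/-- The short complex. -/
noncomputable abbrev scx (hfg : Function.Exact f g) : ShortComplex (ModuleCat.{0} R) :=
  ModuleCat.shortComplexOfCompEqZero f g hfg.linearMap_comp_eq_zero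

variable {f g}

lemma scx_se (hf : Function.Injective f) (hfg : Function.Exact f g) (hg : Function.Surjective g) :
    (scx f g hfg).ShortExact where
  exact := ModuleCat.shortComplex_exact _ hfg
  mono_f := by simpa [scx, ModuleCat.mono_iff_injective] using! hf
  epi_g := by simpa [scx, ModuleCat.epi_iff_surjective] using! hg

include f g in
lemma EV.mid (hf : Function.Injective f) (hfg : Function.Exact f g) (hg : Function.Surjective g)
    {i : ℕ} (hA : EV m A i) (hC : EV m C i) : EV m B i := by
  rw [EV_iff_forall] at *
  intro z
  obtain ⟨y, hy⟩ := Ext.covariant_sequence_exact₂ _ (scx_se hf hfg hg) z (hC _)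
  rw [← hy, hA y, Ext.zero_comp]

lemma EV.left (hf : Function.Injective f) (hfg : Function.Exact f g) (hg : Function.Surjective g)
    {i : ℕ} (hC : EV m C i) (hB : EV m B (i + 1)) : EV m A (i + 1) := by
  rw [EV_iff_forall] at *
  intro z
  obtain ⟨y, hy⟩ := Ext.covariant_sequence_exact₁ _ (scx_se hf hfg hg) z (hB _) rfl
  rw [← hy, hC y, Ext.zero_comp]

lemma EV.right (hf : Function.Injective f) (hfg : Function.Exact f g) (hg : Function.Surjective g)
    {i : ℕ} (hB : EV m B i) (hA : EV m A (i + 1)) : EV m C i := by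
  rw [EV_iff_forall] at *
  intro z
  obtain ⟨y, hy⟩ := Ext.covariant_sequence_exact₃ _ (scx_se hf hfg hg) z rfl (hA _)
  rw [← hy, hB y, Ext.zero_comp]

lemma ext_smul_zero {x : R} (hx : x ∈ m) {i : ℕ}
    (z : Ext (ModuleCat.of R (R ⧸ m)) (ModuleCat.of R A) i) :
    z.comp (Ext.mk₀ (ModuleCat.ofHom (LinearMap.lsmul R A x))) (add_zero i) = 0 := by
  have := Ext.postcomp_smul_id_eq_zero_of_mem_annihilator (M := ModuleCat.of R A)
    (N := ModuleCat.of R (R ⧸ m)) (r := x) (by rw [show Module.annihilator R (ModuleCat.of R (R ⧸ m)) = m from Ideal.annihilator_quotient]; exact hx) i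
  have h2 := congrArg (fun φ => φ.hom z) this
  exact h2

lemma EV.smul_zero {x : R} (hx : x ∈ m) (hf : Function.Injective (LinearMap.lsmul R A x)) :
    EV m A 0 := by
  rw [EV_iff_forall]
  intro z
  have : Mono (ModuleCat.ofHom (LinearMap.lsmul R A x)) := by
    rw [ModuleCat.mono_iff_injective]; exact hf
  apply Ext.postcomp_mk₀_injective_of_mono _ (ModuleCat.ofHom (LinearMap.lsmul R A x))
  rw [map_zero]
  exact ext_smul_zero m hx z

lemma EV.smul_succ {x : R} (hx : x ∈ m) (hf : Function.Injective (LinearMap.lsmul R A x))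
    {g : A →ₗ[R] C}
    (hfg : Function.Exact (LinearMap.lsmul R A x) g) (hg : Function.Surjective g)
    {i : ℕ} (hC : EV m C i) :
    EV m A (i + 1) := by
  rw [EV_iff_forall] at *
  intro z
  obtain ⟨y, hy⟩ := Ext.covariant_sequence_exact₁ _ (scx_se hf hfg hg) z
    (ext_smul_zero m hx z) rfl
  rw [← hy, hC y, Ext.zero_comp]

end ses

section idealses
variable {R : Type} [CommRing R]

/-- map between quotients of ideals -/
noncomputable def iqMap {V1 U1 V2 U2 : Ideal R} (hV : V1 ≤ V2) (hU : U1 ≤ U2) :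
    idealQuot V1 U1 →ₗ[R] idealQuot V2 U2 :=
  Submodule.mapQ _ _ (Submodule.inclusion hV) (fun _ hx => hU hx)

lemma iq_ses {V1 U1 V2 U2 V3 U3 : Ideal R} (hV12 : V1 ≤ V2) (hU12 : U1 ≤ U2)
    (hV23 : V2 ≤ V3) (hU23 : U2 ≤ U3) (h1 : V1 ⊓ U2 ≤ U1) (h2 : V1 ≤ U3)
    (h3 : V2 ⊓ U3 ≤ V1 ⊔ U2) (h4 : V3 ≤ V2 ⊔ U3) :
    Function.Injective (iqMap hV12 hU12) ∧
    Function.Exact (iqMap hV12 hU12) (iqMap hV23 hU23) ∧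
    Function.Surjective (iqMap hV23 hU23) := by
  refine ⟨?_, ?_, ?_⟩
  · rw [injective_iff_map_eq_zero]
    intro a ha
    obtain ⟨⟨a, haV⟩, rfl⟩ := Submodule.mkQ_surjective _ a
    erw [Submodule.mapQ_apply, Submodule.Quotient.mk_eq_zero] at ha
    erw [Submodule.Quotient.mk_eq_zero]
    exact h1 ⟨haV, ha⟩
  · intro b
    obtain ⟨⟨b, hbV⟩, rfl⟩ := Submodule.mkQ_surjective _ b
    constructor
    · intro hb
      erw [Submodule.mapQ_apply, Submodule.Quotient.mk_eq_zero] at hb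
      obtain ⟨v, hv, u, hu, huv⟩ := Submodule.mem_sup.1 (h3 ⟨hbV, hb⟩)
      refine ⟨Submodule.Quotient.mk ⟨v, hv⟩, ?_⟩
      erw [Submodule.mapQ_apply, Submodule.Quotient.eq]
      change v - b ∈ U2
      rw [← huv]
      simpa using hu
    · rintro ⟨a, ha⟩
      obtain ⟨⟨a, haV⟩, rfl⟩ := Submodule.mkQ_surjective _ a
      rw [← ha]
      erw [Submodule.mapQ_apply, Submodule.Quotient.mk_eq_zero]
      exact h2 haV
  · intro c
    obtain ⟨⟨c, hc⟩, rfl⟩ := Submodule.mkQ_surjective _ c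
    obtain ⟨v, hv, u, hu, huv⟩ := Submodule.mem_sup.1 (h4 hc)
    refine ⟨Submodule.Quotient.mk ⟨v, hv⟩, ?_⟩
    erw [Submodule.mapQ_apply, Submodule.Quotient.eq]
    change v - c ∈ U3
    rw [← huv]
    simpa using hu

end idealses

section mon
variable (K : Type) [Field K] {n : ℕ}

/-- Ideal spanned by the square-free monomials in `V`. -/
noncomputable def sqI (V : Set (Finset (Fin n))) : Ideal (MvPolynomial (Fin n) K) :=
  Ideal.span (sqMon K '' V)

/-- indicator exponent -/
noncomputable def ind (T : Finset (Fin n)) : Fin n →₀ ℕ := Finsupp.indicator T (fun _ _ => 1)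

lemma ind_apply (T : Finset (Fin n)) (i : Fin n) : ind T i = if i ∈ T then 1 else 0 := by
  simp [ind, Finsupp.indicator_apply]

lemma ind_support (T : Finset (Fin n)) : (ind T).support = T := by
  ext i; simp [ind_apply]

lemma ind_le (T : Finset (Fin n)) (s : Fin n →₀ ℕ) : ind T ≤ s ↔ T ⊆ s.support := by
  rw [Finsupp.le_def]
  simp only [ind_apply]
  constructor
  · intro h i hi
    have := h i
    simp [hi] at this
    simp; omega
  · intro h i
    split_ifs with hi
    · have := h hi
      simp at this; omega
    · simp

lemma sqMon_eq (T : Finset (Fin n)) : sqMon K T = monomial (ind T) 1 := by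
  rw [sqMon, monomial_eq]
  simp only [map_one, one_mul]
  rw [Finsupp.prod, ind_support]
  refine Finset.prod_congr rfl fun i hi => ?_
  simp [ind_apply, hi]

variable {K}

lemma mem_sqI' {V : Set (Finset (Fin n))} {p : MvPolynomial (Fin n) K} :
    p ∈ sqI K V ↔ ∀ s ∈ p.support, ∃ T ∈ V, T ⊆ s.support := by
  have : sqMon K '' V = (fun s => monomial s (1 : K)) '' (ind '' V) := by
    rw [Set.image_image]
    exact Set.image_congr fun T _ => sqMon_eq K T
  rw [sqI, this, mem_ideal_span_monomial_image]
  simp [ind_le]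

lemma mem_sqI {V : Set (Finset (Fin n))} (hV : IsUpperSet V) {p : MvPolynomial (Fin n) K} :
    p ∈ sqI K V ↔ ∀ s ∈ p.support, s.support ∈ V := by
  rw [mem_sqI']
  exact forall₂_congr fun s _ => ⟨fun ⟨T, hT, h⟩ => hV h hT, fun h => ⟨_, h, le_rfl⟩⟩

lemma sqMon_mem' {V : Set (Finset (Fin n))} {T : Finset (Fin n)} :
    sqMon K T ∈ sqI K V ↔ ∃ T' ∈ V, T' ⊆ T := by
  classical
  rw [mem_sqI', sqMon_eq, support_monomial]
  simp [ind_support]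

lemma sqMon_mul_mem {V : Set (Finset (Fin n))} (hV : IsUpperSet V) {T : Finset (Fin n)}
    {p : MvPolynomial (Fin n) K} :
    sqMon K T * p ∈ sqI K V ↔ ∀ s ∈ p.support, s.support ∪ T ∈ V := by
  rw [mem_sqI hV, sqMon_eq]
  have hs : ∀ s : Fin n →₀ ℕ, (ind T + s).support = s.support ∪ T := by
    intro s
    ext i
    simp only [Finsupp.mem_support_iff, Finsupp.add_apply, ind_apply, Finset.mem_union]
    by_cases hi : i ∈ T <;> simp [hi]
  constructor
  · intro h s hs'
    rw [← hs]
    apply h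
    rw [mem_support_iff] at *
    rwa [coeff_monomial_mul, one_mul]
  · intro h s hs'
    rw [mem_support_iff, coeff_monomial_mul'] at hs'
    split_ifs at hs' with h1
    · have := h (s - ind T) (by rw [mem_support_iff]; simpa using hs')
      rw [← hs, add_tsub_cancel_of_le h1] at this
      exact this
    · exact absurd rfl hs'

lemma sqI_mono {V U : Set (Finset (Fin n))} (h : V ⊆ U) : sqI K V ≤ sqI K U :=
  Ideal.span_mono (Set.image_mono h)

lemma sqI_le_sup {V U W : Set (Finset (Fin n))} (h : V ⊆ U ∪ W) :
    sqI K V ≤ sqI K U ⊔ sqI K W := by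
  refine (sqI_mono h).trans ?_
  rw [sqI, Set.image_union, Ideal.span_union]
  exact le_rfl

lemma sqI_inf {V U W : Set (Finset (Fin n))} (hV : IsUpperSet V) (hU : IsUpperSet U)
    (hW : IsUpperSet W) (h : V ∩ U ⊆ W) :
    sqI K V ⊓ sqI K U ≤ sqI K W := by
  rintro p ⟨h1, h2⟩
  rw [mem_sqI hW]
  exact fun s hs => h ⟨(mem_sqI hV).1 h1 s hs, (mem_sqI hU).1 h2 s hs⟩

lemma sq_ses {V1 U1 V2 U2 V3 U3 : Set (Finset (Fin n))}
    (hv1 : IsUpperSet V1) (hu1 : IsUpperSet U1) (hv2 : IsUpperSet V2) (hu2 : IsUpperSet U2)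
    (hu3 : IsUpperSet U3)
    (hV12 : V1 ⊆ V2) (hU12 : U1 ⊆ U2)
    (hV23 : V2 ⊆ V3) (hU23 : U2 ⊆ U3) (h1 : V1 ∩ U2 ⊆ U1) (h2 : V1 ⊆ U3)
    (h3 : V2 ∩ U3 ⊆ V1 ∪ U2) (h4 : V3 ⊆ V2 ∪ U3) :
    Function.Injective (iqMap (sqI_mono (K := K) hV12) (sqI_mono (K := K) hU12)) ∧
    Function.Exact (iqMap (sqI_mono (K := K) hV12) (sqI_mono (K := K) hU12))
      (iqMap (sqI_mono (K := K) hV23) (sqI_mono (K := K) hU23)) ∧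
    Function.Surjective (iqMap (sqI_mono (K := K) hV23) (sqI_mono (K := K) hU23)) := by
  apply iq_ses
  · exact sqI_inf hv1 hu2 hu1 h1
  · exact sqI_mono h2
  · exact (sqI_inf hv2 hu3 (hv1.union hu2) h3).trans (sqI_le_sup le_rfl)
  · exact sqI_le_sup h4

/-- subsets not inside `B` -/
def nsub (B : Finset (Fin n)) : Set (Finset (Fin n)) := {T | ¬ T ⊆ B}

lemma nsub_upper (B : Finset (Fin n)) : IsUpperSet (nsub B) :=
  fun _ _ h h1 h2 => h1 (h.trans h2)

/-- the ring `K[B]` as a quotient. -/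
abbrev CB (K : Type) [Field K] {n : ℕ} (B : Finset (Fin n)) : Type :=
  MvPolynomial (Fin n) K ⧸ sqI K (nsub B)

lemma cyc (V U : Set (Finset (Fin n))) (hV : IsUpperSet V) (hU : IsUpperSet U)
    (T B : Finset (Fin n)) (hTB : T ⊆ B) (h : ∀ A, (A ∈ V ∧ A ∉ U) ↔ (T ⊆ A ∧ A ⊆ B)) :
    Nonempty (CB K B ≃ₗ[MvPolynomial (Fin n) K] idealQuot (sqI K V) (sqI K U)) := by
  have hTV : T ∈ V := ((h T).2 ⟨le_rfl, hTB⟩).1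
  have hm : sqMon K T ∈ sqI K V := sqMon_mem'.2 ⟨T, hTV, le_rfl⟩
  let φ : MvPolynomial (Fin n) K →ₗ[MvPolynomial (Fin n) K] idealQuot (sqI K V) (sqI K U) :=
    LinearMap.toSpanSingleton _ _ (Submodule.Quotient.mk ⟨sqMon K T, hm⟩)
  have hφ : ∀ p, φ p = Submodule.Quotient.mk ⟨sqMon K T * p, Ideal.mul_mem_right _ _ hm⟩ := by
    intro p
    simp only [φ, LinearMap.toSpanSingleton_apply, ← Submodule.Quotient.mk_smul]
    congr 1
    ext1
    simp [mul_comm]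
  have hker : LinearMap.ker φ = sqI K (nsub B) := by
    ext p
    rw [LinearMap.mem_ker, hφ, Submodule.Quotient.mk_eq_zero]
    change sqMon K T * p ∈ sqI K U ↔ _
    rw [sqMon_mul_mem hU, mem_sqI (nsub_upper B)]
    refine forall₂_congr fun s _ => ?_
    have h1 := h (s.support ∪ T)
    have h2 : s.support ∪ T ∈ V := hV Finset.subset_union_right hTV
    have h3 : s.support ∪ T ⊆ B ↔ s.support ⊆ B :=
      ⟨fun h => Finset.subset_union_left.trans h, fun h => Finset.union_subset h hTB⟩
    simp only [h2, true_and, Finset.subset_union_right, h3] at h1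
    change _ ↔ ¬ _
    rw [← h1, not_not]
  have hsurj : Function.Surjective φ := by
    intro c
    obtain ⟨⟨c, hc⟩, rfl⟩ := Submodule.mkQ_surjective _ c
    have hle : sqI K V ≤ sqI K {T} ⊔ sqI K U := by
      have : V ⊆ {A | T ⊆ A} ∪ U := by
        intro A hA
        by_cases hAU : A ∈ U
        · exact Or.inr hAU
        · exact Or.inl ((h A).1 ⟨hA, hAU⟩).1
      refine (sqI_le_sup this).trans (sup_le_sup_right ?_ _)
      rw [sqI, Ideal.span_le]
      rintro _ ⟨A, hA, rfl⟩
      exact sqMon_mem'.2 ⟨T, rfl, hA⟩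
    obtain ⟨v, hv, u, hu, huv⟩ := Submodule.mem_sup.1 (hle hc)
    rw [sqI, Set.image_singleton, Ideal.mem_span_singleton] at hv
    obtain ⟨q, rfl⟩ := hv
    refine ⟨q, ?_⟩
    rw [hφ]
    erw [Submodule.Quotient.eq]
    change sqMon K T * q - c ∈ sqI K U
    rw [← huv]
    simpa using hu
  exact ⟨(Submodule.quotEquivOfEq _ _ hker.symm).trans (φ.quotKerEquivOfSurjective hsurj)⟩

lemma CB_step (t : Fin n) (B : Finset (Fin n)) (ht : t ∉ B) :
    ∃ g : CB K (insert t B) →ₗ[MvPolynomial (Fin n) K] CB K B,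
    Function.Injective (LinearMap.lsmul (MvPolynomial (Fin n) K) (CB K (insert t B)) (sqMon K {t}))
    ∧ Function.Exact
      (LinearMap.lsmul (MvPolynomial (Fin n) K) (CB K (insert t B)) (sqMon K {t})) g
    ∧ Function.Surjective g := by
  have hsub : nsub (insert t B) ⊆ nsub B :=
    fun A hA hAB => hA (hAB.trans (Finset.subset_insert _ _))
  have hls : ∀ a : MvPolynomial (Fin n) K,
      LinearMap.lsmul (MvPolynomial (Fin n) K) (CB K (insert t B)) (sqMon K {t})
      (Submodule.Quotient.mk a) = Submodule.Quotient.mk (sqMon K {t} * a) := fun _ => rfl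
  refine ⟨Submodule.mapQ _ _ LinearMap.id (sqI_mono hsub), ?_, ?_, ?_⟩
  · rw [injective_iff_map_eq_zero]
    intro a ha
    obtain ⟨a, rfl⟩ := Submodule.mkQ_surjective _ a
    erw [hls, Submodule.Quotient.mk_eq_zero] at ha
    rw [sqMon_mul_mem (nsub_upper _)] at ha
    erw [Submodule.Quotient.mk_eq_zero]
    rw [mem_sqI (nsub_upper _)]
    intro s hs hsB
    exact ha s hs (Finset.union_subset hsB (by simp))
  · intro b
    obtain ⟨b, rfl⟩ := Submodule.mkQ_surjective _ b
    constructor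
    · intro hb
      erw [Submodule.mapQ_apply, Submodule.Quotient.mk_eq_zero] at hb
      have hle : sqI K (nsub B) ≤ sqI K {{t}} ⊔ sqI K (nsub (insert t B)) := by
        have : nsub B ⊆ {A | {t} ⊆ A} ∪ nsub (insert t B) := by
          intro A hA
          by_cases htA : t ∈ A
          · exact Or.inl (by simpa using htA)
          · refine Or.inr fun h => hA ?_
            rwa [Finset.subset_insert_iff_of_notMem htA] at h
        refine (sqI_le_sup this).trans (sup_le_sup_right ?_ _)
        rw [sqI, Ideal.span_le]
        rintro _ ⟨A, hA, rfl⟩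
        exact sqMon_mem'.2 ⟨{t}, rfl, hA⟩
      obtain ⟨v, hv, u, hu, huv⟩ := Submodule.mem_sup.1 (hle hb)
      rw [sqI, Set.image_singleton, Ideal.mem_span_singleton] at hv
      obtain ⟨q, rfl⟩ := hv
      refine ⟨Submodule.Quotient.mk q, ?_⟩
      erw [hls, Submodule.Quotient.eq]
      replace huv : _ = b := huv
      rw [← huv]
      simpa using hu
    · rintro ⟨a, ha⟩
      obtain ⟨a, rfl⟩ := Submodule.mkQ_surjective _ a
      rw [← ha]
      erw [hls, Submodule.mapQ_apply, Submodule.Quotient.mk_eq_zero]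
      rw [LinearMap.id_apply, sqMon_mul_mem (nsub_upper _)]
      intro s _ h
      exact ht (h (by simp))
  · intro c
    obtain ⟨c, rfl⟩ := Submodule.mkQ_surjective _ c
    exact ⟨Submodule.Quotient.mk c, rfl⟩

lemma sqMon_mem_max (t : Fin n) : sqMon K {t} ∈ maxGraded K n := by
  simp only [sqMon, Finset.prod_singleton]
  exact Ideal.subset_span ⟨t, rfl⟩

lemma CB_vanish (B : Finset (Fin n)) : ∀ i < B.card, EV (maxGraded K n) (CB K B) i := by
  induction B using Finset.induction_on with
  | empty => simp
  | insert t B ht ih =>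
    obtain ⟨g, h1, h2, h3⟩ := CB_step (K := K) t B ht
    rw [Finset.card_insert_of_notMem ht]
    rintro (_ | i) hi
    · exact EV.smul_zero _ (sqMon_mem_max t) h1
    · exact EV.smul_succ _ (sqMon_mem_max t) h1 h2 h3 (ih i (by omega))

lemma maxG_le : maxGraded K n ≤ sqI K (nsub ∅) := by
  rw [maxGraded, Ideal.span_le]
  rintro _ ⟨t, rfl⟩
  have : sqMon K {t} ∈ sqI K (nsub ∅) := sqMon_mem'.2 ⟨{t}, by simp [nsub], le_rfl⟩
  simpa [sqMon] using this

lemma CB_nonvanish (B : Finset (Fin n)) : ¬ EV (maxGraded K n) (CB K B) B.card := by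
  induction B using Finset.induction_on with
  | empty =>
    rw [Finset.card_empty, EV_iff_forall]
    intro h
    let g : (MvPolynomial (Fin n) K ⧸ maxGraded K n) →ₗ[MvPolynomial (Fin n) K] CB K (∅ : Finset (Fin n)) :=
      Submodule.mapQ _ _ LinearMap.id maxG_le
    have h1 := h (Ext.mk₀ (ModuleCat.ofHom g))
    have h2 : ModuleCat.ofHom g = 0 := by
      apply Ext.homEquiv₀.symm.injective
      change Ext.mk₀ _ = Ext.mk₀ _
      rw [h1, Ext.mk₀_zero]
    have h3 : g (Submodule.Quotient.mk 1) = 0 := by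
      have := congrArg (fun φ => φ.hom (Submodule.Quotient.mk 1)) h2
      exact this
    erw [Submodule.mapQ_apply, Submodule.Quotient.mk_eq_zero] at h3
    have h4 := (mem_sqI (nsub_upper _)).1 h3 0 (by simp)
    exact h4 (by simp)
  | insert t B ht ih =>
    obtain ⟨g, h1, h2, h3⟩ := CB_step (K := K) t B ht
    rw [Finset.card_insert_of_notMem ht]
    intro h
    refine ih (EV.right _ h1 h2 h3 (CB_vanish _ _ ?_) h)
    rw [Finset.card_insert_of_notMem ht]
    omega

lemma big_vanish (d : ℕ) (k : ℕ) (V U : Set (Finset (Fin n))) (hV : IsUpperSet V)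
    (hU : IsUpperSet U) (hUV : U ⊆ V) (hk : (V \ U).ncard = k)
    (hd : ∀ A ∈ V, A ∉ U → d ≤ A.card) (i : ℕ) (hi : i < d) :
    EV (maxGraded K n) (idealQuot (sqI K V) (sqI K U)) i := by
  induction k generalizing U with
  | zero =>
    rw [Set.ncard_eq_zero (Set.toFinite _), Set.sdiff_eq_empty] at hk
    have : Subsingleton (idealQuot (sqI K V) (sqI K U)) := by
      rw [Submodule.Quotient.subsingleton_iff, eq_top_iff]
      rintro ⟨x, hx⟩ -
      exact sqI_mono hk hx
    exact EV_of_subsingleton _ _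
  | succ k ih =>
    have hne : (V \ U).Nonempty := by
      rw [← Set.ncard_pos (Set.toFinite _)]; omega
    obtain ⟨T, hT⟩ := (Set.toFinite (V \ U)).exists_maximal hne
    have hTV : T ∈ V := hT.prop.1
    have hTU : T ∉ U := hT.prop.2
    have hU' : IsUpperSet (insert T U) := by
      rintro A A' hAA' (rfl | hA)
      · by_cases h : A' ∈ U
        · exact Or.inr h
        · exact Or.inl (le_antisymm (hT.2 ⟨hV hAA' hTV, h⟩ hAA') hAA')
      · exact Or.inr (hU hAA' hA)
    have hU'V : insert T U ⊆ V := Set.insert_subset hTV hUV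
    have hUU' : U ⊆ insert T U := Set.subset_insert _ _
    obtain ⟨e⟩ := cyc (K := K) (insert T U) U hU' hU T T le_rfl (by
      intro A
      constructor
      · rintro ⟨rfl | h, h2⟩
        · exact ⟨le_rfl, le_rfl⟩
        · exact absurd h h2
      · rintro ⟨h1, h2⟩
        obtain rfl := Finset.Subset.antisymm h1 h2
        exact ⟨Or.inl rfl, hTU⟩)
    obtain ⟨s1, s2, s3⟩ := sq_ses (K := K) (V1 := insert T U) (U1 := U) (V2 := V) (U2 := U)
      (V3 := V) (U3 := insert T U) hU' hU hV hU hU' hU'V le_rfl le_rfl hUU'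
      Set.inter_subset_right le_rfl (fun A hA => Or.inl hA.2) (fun A hA => Or.inl hA)
    refine EV.mid _ s1 s2 s3 (EV.congr e (CB_vanish T i ?_)) (ih _ hU' hU'V ?_ ?_)
    · exact lt_of_lt_of_le hi (hd T hTV hTU)
    · have : V \ insert T U = (V \ U) \ {T} := by
        ext A; simp only [Set.mem_sdiff, Set.mem_insert_iff, Set.mem_singleton_iff]; tauto
      rw [this, Set.ncard_sdiff_singleton_of_mem hT.prop, hk]
      rfl
    · intro A hA hA'
      exact hd A hA fun h => hA' (Or.inr h)

set_option maxHeartbeats 1000000 in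
lemma main_nonvanish (d : ℕ) (V U : Set (Finset (Fin n))) (hV : IsUpperSet V)
    (hU : IsUpperSet U) (hUV : U ⊆ V) (hd0 : 0 < d)
    (hd : ∀ A ∈ V, A ∉ U → d ≤ A.card) (F1 F2 : Finset (Fin n)) (h1V : F1 ∈ V) (h2V : F2 ∈ V)
    (h1d : F1.card = d) (h2d : F2.card = d) (hb : (F1 ∪ F2).card = d + 1) (hbU : F1 ∪ F2 ∉ U)
    (huniq : ∀ T : Finset (Fin n), T.card = d + 1 → (F1 ⊆ T ∨ F2 ⊆ T) → T ∉ U → T = F1 ∪ F2) :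
    ¬ EV (maxGraded K n) (idealQuot (sqI K V) (sqI K U)) d := by
  intro hEV
  have hc := Finset.card_union_add_card_inter F1 F2
  have hFup : IsUpperSet {A : Finset (Fin n) | F1 ⊆ A ∨ F2 ⊆ A} := by
    rintro A A' hAA' (h | h)
    · exact Or.inl (h.trans hAA')
    · exact Or.inr (h.trans hAA')
  have hcup : IsUpperSet {A : Finset (Fin n) | F1 ∩ F2 ⊆ A} := fun A A' hAA' h => h.trans hAA'
  have hUb : U ⊆ nsub (F1 ∪ F2) := fun A hA h => hbU (hU h hA)
  have key : ∀ A, (F1 ⊆ A ∨ F2 ⊆ A) → A ∉ U → A ⊆ F1 ∪ F2 := by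
    intro A hA hAU x hxA
    by_contra hx
    have aux : ∀ F : Finset (Fin n), F.card = d → F ⊆ A → F ⊆ F1 ∪ F2 →
        (F1 ⊆ insert x F ∨ F2 ⊆ insert x F) → False := by
      intro F hFd hFA hFb hF
      have hxF : x ∉ F := fun h => hx (hFb h)
      have := huniq (insert x F) (by rw [Finset.card_insert_of_notMem hxF, hFd]) hF
        (fun h => hAU (hU (Finset.insert_subset hxA hFA) h))
      exact hx (this ▸ Finset.mem_insert_self x F)
    rcases hA with h | h
    · exact aux F1 h1d h Finset.subset_union_left (Or.inl (Finset.subset_insert _ _))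
    · exact aux F2 h2d h Finset.subset_union_right (Or.inr (Finset.subset_insert _ _))
  obtain ⟨e, rfl⟩ : ∃ e, d = e + 1 := ⟨d - 1, by omega⟩
  set Q : Set (Finset (Fin n)) := U ∪ {A | F1 ⊆ A ∨ F2 ⊆ A} with hQ
  have hQup : IsUpperSet Q := hU.union hFup
  have hUQ : U ⊆ Q := Set.subset_union_left
  have hQV : Q ⊆ V := Set.union_subset hUV (by
    rintro A (h | h)
    · exact hV h h1V
    · exact hV h h2V)
  have hEQ : EV (maxGraded K n) (idealQuot (sqI K Q) (sqI K U)) (e + 1) := by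
    obtain ⟨s1, s2, s3⟩ := sq_ses (K := K) (V1 := Q) (U1 := U) (V2 := V) (U2 := U)
      (V3 := V) (U3 := Q) hQup hU hV hU hQup hQV le_rfl le_rfl hUQ
      Set.inter_subset_right le_rfl (fun A hA => Or.inl hA.2) (fun A hA => Or.inl hA)
    refine EV.left _ s1 s2 s3 (big_vanish (e + 1) _ V Q hV hQup hQV rfl ?_ e (by omega)) hEV
    intro A hA hA'
    exact hd A hA fun h => hA' (hUQ h)
  set b := F1 ∪ F2 with hbdef
  set c := F1 ∩ F2 with hcdef
  have hcb : c ⊆ b := Finset.inter_subset_left.trans Finset.subset_union_left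
  set W : Set (Finset (Fin n)) := nsub b ∪ {A | c ⊆ A} with hW
  set U3 : Set (Finset (Fin n)) := nsub b ∪ {A | F1 ⊆ A ∨ F2 ⊆ A} with hU3
  have hWup : IsUpperSet W := (nsub_upper b).union hcup
  have hU3up : IsUpperSet U3 := (nsub_upper b).union hFup
  have hFc : ∀ A, (F1 ⊆ A ∨ F2 ⊆ A) → c ⊆ A := by
    rintro A (h | h)
    · exact Finset.inter_subset_left.trans h
    · exact Finset.inter_subset_right.trans h
  obtain ⟨s1, s2, s3⟩ := sq_ses (K := K) (V1 := Q) (U1 := U) (V2 := W) (U2 := nsub b)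
      (V3 := W) (U3 := U3) hQup hU hWup (nsub_upper b) hU3up
      (by
        rintro A (h | h)
        · exact Or.inl (hUb h)
        · exact Or.inr (hFc A h))
      hUb le_rfl Set.subset_union_left
      (by
        rintro A ⟨h | h, h2⟩
        · exact h
        · by_contra hAU
          exact h2 (key A h hAU))
      (by
        rintro A (h | h)
        · exact Or.inl (hUb h)
        · exact Or.inr h)
      (by
        rintro A ⟨_, h | h⟩
        · exact Or.inr h
        · exact Or.inl (Or.inr h))
      (fun A hA => Or.inl hA)
  obtain ⟨e1⟩ := cyc (K := K) W (nsub b) hWup (nsub_upper b) c b hcb (by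
    intro A
    simp only [hW, nsub, Set.mem_union, Set.mem_ofPred_eq]
    tauto)
  have hne1 : ¬ F1 ⊆ F2 := by
    intro h
    rw [hbdef, Finset.union_eq_right.2 h] at hb; omega
  have hne2 : ¬ F2 ⊆ F1 := by
    intro h
    rw [hbdef, Finset.union_eq_left.2 h] at hb; omega
  have hins : ∀ x F, x ∈ F → x ∉ c → F.card = e + 1 → c ⊆ F → F = insert x c := by
    intro x F hxF hxc hF hcF
    symm
    apply Finset.eq_of_subset_of_card_le (Finset.insert_subset hxF hcF)
    rw [Finset.card_insert_of_notMem hxc]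
    omega
  obtain ⟨e2⟩ := cyc (K := K) W U3 hWup hU3up c c le_rfl (by
    intro A
    simp only [hW, hU3, nsub, Set.mem_union, Set.mem_ofPred_eq]
    constructor
    · rintro ⟨h1, h2⟩
      push Not at h2
      obtain ⟨hAb, h3, h4⟩ := h2
      have hcA : c ⊆ A := by tauto
      refine ⟨hcA, fun x hx => ?_⟩
      by_contra hxc
      rcases Finset.mem_union.1 (hAb hx) with h | h
      · refine h3 ?_
        rw [hins x F1 h hxc h1d Finset.inter_subset_left]
        exact Finset.insert_subset hx hcA
      · refine h4 ?_
        rw [hins x F2 h hxc h2d Finset.inter_subset_right]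
        exact Finset.insert_subset hx hcA
    · rintro ⟨h1, h2⟩
      refine ⟨Or.inr h1, ?_⟩
      rintro (h | h | h)
      · exact h (h2.trans hcb)
      · exact hne1 ((h.trans h2).trans Finset.inter_subset_right)
      · exact hne2 ((h.trans h2).trans Finset.inter_subset_left))
  have hfin := EV.right _ s1 s2 s3 (EV.congr e1 (CB_vanish b e (by omega))) hEQ
  have hce : c.card = e := by omega
  apply CB_nonvanish (K := K) c
  rw [hce]
  exact hfin.congr e2.symm

lemma sqI_up (W : Set (Finset (Fin n))) : sqI K {A | ∃ T ∈ W, T ⊆ A} = sqI K W := by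
  ext p
  rw [mem_sqI', mem_sqI']
  refine forall₂_congr fun s _ => ⟨?_, ?_⟩
  · rintro ⟨A, ⟨T, hT, hTA⟩, hA⟩
    exact ⟨T, hT, hTA.trans hA⟩
  · rintro ⟨T, hT, hTA⟩
    exact ⟨T, ⟨T, hT, le_rfl⟩, hTA⟩

lemma smul_top_ne (d : ℕ) (V U : Set (Finset (Fin n))) (hV : IsUpperSet V)
    (hU : IsUpperSet U) (hd : ∀ A ∈ V, d ≤ A.card) (F : Finset (Fin n)) (hFV : F ∈ V)
    (hFd : F.card = d) (hFU : F ∉ U) :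
    maxGraded K n • (⊤ : Submodule (MvPolynomial (Fin n) K) (idealQuot (sqI K V) (sqI K U)))
      ≠ ⊤ := by
  classical
  intro htop
  have hm : sqMon K F ∈ sqI K V := sqMon_mem'.2 ⟨F, hFV, le_rfl⟩
  have key : ∀ y ∈ maxGraded K n •
      (⊤ : Submodule (MvPolynomial (Fin n) K) (idealQuot (sqI K V) (sqI K U))),
      ∃ q : sqI K V, Submodule.Quotient.mk q = y ∧ coeff (ind F) (q : MvPolynomial (Fin n) K) = 0 := by
    intro y hy
    induction hy using Submodule.smul_induction_on' with
    | smul r hr y hy =>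
      obtain ⟨q, rfl⟩ := Submodule.mkQ_surjective _ y
      refine ⟨r • q, rfl, ?_⟩
      change coeff (ind F) (r * (q : MvPolynomial (Fin n) K)) = 0
      rw [coeff_mul]
      refine Finset.sum_eq_zero ?_
      rintro ⟨a, b⟩ hab
      rw [Finset.HasAntidiagonal.mem_antidiagonal] at hab
      by_contra hne
      simp only at hab
      have ha : coeff a r ≠ 0 := left_ne_zero_of_mul hne
      have hb : coeff b (q : MvPolynomial (Fin n) K) ≠ 0 := right_ne_zero_of_mul hne
      have hbV := (mem_sqI hV).1 q.2 b (by rwa [mem_support_iff])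
      have hbF : b.support ⊆ F := by
        rw [← ind_support F, ← hab]
        intro i hi
        simp at hi ⊢
        tauto
      have hbF' : b.support = F :=
        Finset.eq_of_subset_of_card_le hbF (by rw [hFd]; exact hd _ hbV)
      have hle : ind F ≤ b := (ind_le _ _).2 hbF'.symm.subset
      have ha0 : a = 0 := by
        ext i
        have h1 := hle i
        have h2 := DFunLike.congr_fun hab i
        simp at h2
        simp
        omega
      have := (mem_sqI (nsub_upper _)).1 (maxG_le hr) a (by rwa [mem_support_iff])
      rw [ha0] at this
      exact this (by simp)
    | add y hy z hz ihy ihz =>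
      obtain ⟨q, rfl, hq⟩ := ihy
      obtain ⟨q', rfl, hq'⟩ := ihz
      exact ⟨q + q', rfl, by simp [hq, hq']⟩
  obtain ⟨q, hq, hq0⟩ := key (Submodule.Quotient.mk ⟨sqMon K F, hm⟩) (by rw [htop]; trivial)
  rw [Submodule.Quotient.eq] at hq
  have hq' : (q : MvPolynomial (Fin n) K) - sqMon K F ∈ sqI K U := hq
  rw [mem_sqI hU] at hq'
  have h1 := hq' (ind F) (by
    rw [mem_support_iff, coeff_sub, hq0, sqMon_eq, coeff_monomial]
    simp)
  rw [ind_support] at h1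
  exact hFU h1

end mon

lemma depth_eq {R : Type} [CommRing R] [IsNoetherianRing R] (m : Ideal R) (M : Type)
    [AddCommGroup M] [Module R M] [Module.Finite R M] (d : ℕ)
    (hne : m • (⊤ : Submodule R M) ≠ ⊤) (h1 : ∀ i < d, EV m M i) (h2 : ¬ EV m M d) :
    moduleDepth m M = d := by
  have hsupp : Module.support R (ModuleCat.of R (R ⧸ m)) = PrimeSpectrum.zeroLocus m := by
    rw [Module.support_eq_zeroLocus]
    rw [show Module.annihilator R (ModuleCat.of R (R ⧸ m)) = m from Ideal.annihilator_quotient]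
  have : Module.Finite R (ModuleCat.of R (R ⧸ m)) :=
    inferInstanceAs (Module.Finite R (R ⧸ m))
  have : Module.Finite R (ModuleCat.of R M) := inferInstanceAs (Module.Finite R M)
  apply le_antisymm
  · apply sSup_le
    rintro k ⟨rs, rfl, hmem, hreg⟩
    rw [Nat.cast_le]
    by_contra hlt
    push Not at hlt
    exact h2 (ModuleCat.subsingleton_ext_of_exists_isRegular m (ModuleCat.of R (R ⧸ m))
      hsupp.subset (ModuleCat.of R M) (lt_top_iff_ne_top.2 hne) rs hmem hreg d hlt)
  · apply le_sSup
    obtain ⟨rs, hl, hmem, hreg⟩ := ModuleCat.exists_isRegular_of_exists_subsingleton_ext m d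
      (ModuleCat.of R M) (lt_top_iff_ne_top.2 hne) (ModuleCat.of R (R ⧸ m)) hsupp h1
    exact ⟨rs, by rw [hl], hmem, hreg⟩

end Aux

/-- Lemma 1.8. -/
theorem stmt_5 (n : ℕ) (K : Type) [Field K] (d : ℕ) (hd : 0 < d)
    (I J : Ideal (MvPolynomial (Fin n) K)) (hJ0 : J ≠ ⊥) (hJI : J < I)
    (r : ℕ) (hr2 : 2 ≤ r) (f : Fin r → Finset (Fin n)) (hfinj : Function.Injective f)
    (hfd : ∀ i, (f i).card = d)
    (hIgen : I = Ideal.span (Set.range fun i => sqMon K (f i)))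
    (hJgen : GenBySqMonOfDeg K (fun k => k = d + 1) J)
    (hbcard : (f ⟨0, by omega⟩ ∪ f ⟨1, by omega⟩).card = d + 1)
    (hbJ : sqMon K (f ⟨0, by omega⟩ ∪ f ⟨1, by omega⟩) ∉ J)
    (huniq : ∀ T : Finset (Fin n), T.card = d + 1 →
      sqMon K T ∈ Ideal.span {sqMon K (f ⟨0, by omega⟩), sqMon K (f ⟨1, by omega⟩)} →
      sqMon K T ∉ J → T = f ⟨0, by omega⟩ ∪ f ⟨1, by omega⟩) :
    moduleDepth (maxGraded K n) (idealQuot I J) = (d : ℕ∞) := by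
  obtain ⟨G, hG, hJG⟩ := hJgen
  set F1 := f ⟨0, by omega⟩ with hF1
  set F2 := f ⟨1, by omega⟩ with hF2
  let V : Set (Finset (Fin n)) := {A | ∃ T ∈ Set.range f, T ⊆ A}
  let U : Set (Finset (Fin n)) := {A | ∃ T ∈ G, T ⊆ A}
  have hIV : I = sqI K V := by
    rw [sqI_up, hIgen, sqI, ← Set.range_comp]
    rfl
  have hJU : J = sqI K U := by
    rw [sqI_up, hJG, sqI]
  have hup : ∀ W : Set (Finset (Fin n)), IsUpperSet {A | ∃ T ∈ W, T ⊆ A} := by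
    rintro W A A' h ⟨T, hT, hTA⟩
    exact ⟨T, hT, hTA.trans h⟩
  have hV : IsUpperSet V := hup _
  have hU : IsUpperSet U := hup _
  have hmem : ∀ {W : Set (Finset (Fin n))}, IsUpperSet W → ∀ A,
      (sqMon K A ∈ sqI K W ↔ A ∈ W) := by
    intro W hW A
    rw [sqMon_mem']
    exact ⟨fun ⟨T, hT, h⟩ => hW h hT, fun h => ⟨A, h, le_rfl⟩⟩
  have hUV : U ⊆ V := by
    intro A hA
    rw [← hmem hV, ← hIV]
    apply hJI.le
    rw [hJU, hmem hU]
    exact hA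
  have hdV : ∀ A ∈ V, d ≤ A.card := by
    rintro A ⟨_, ⟨i, rfl⟩, h⟩
    rw [← hfd i]
    exact Finset.card_le_card h
  have h1V : F1 ∈ V := ⟨F1, ⟨_, rfl⟩, le_rfl⟩
  have h2V : F2 ∈ V := ⟨F2, ⟨_, rfl⟩, le_rfl⟩
  have h1U : F1 ∉ U := by
    rintro ⟨T, hT, h⟩
    have := Finset.card_le_card h
    rw [hG T hT, hF1, hfd] at this
    omega
  have hbU : F1 ∪ F2 ∉ U := by
    rwa [hJU, hmem hU] at hbJ
  have hdiv : ∀ F T : Finset (Fin n), F ⊆ T → sqMon K F ∣ sqMon K T := fun F T h =>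
    Finset.prod_dvd_prod_of_subset _ _ _ h
  rw [hIV, hJU]
  have : Module.Finite (MvPolynomial (Fin n) K) (sqI K V) :=
    Module.Finite.iff_fg.2 (IsNoetherian.noetherian _)
  refine depth_eq _ _ d (smul_top_ne d V U hV hU hdV F1 h1V (hfd _) h1U)
    (fun i hi => big_vanish d _ V U hV hU hUV rfl (fun A hA _ => hdV A hA) i hi)
    (main_nonvanish d V U hV hU hUV hd (fun A hA _ => hdV A hA) F1 F2 h1V h2V (hfd _) (hfd _)
      hbcard hbU ?_)
  intro T hT hF hTU
  refine huniq T hT ?_ ?_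
  · rcases hF with h | h
    · exact Ideal.mem_of_dvd _ (hdiv _ _ h) (Ideal.subset_span (by simp))
    · exact Ideal.mem_of_dvd _ (hdiv _ _ h) (Ideal.subset_span (by simp))
  · rwa [hJU, hmem hU]
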